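/- arXiv:1604.07014 — 3 statements merged into one kernel-verified Lean document; each statement's English description precedes it below -/
import Mathlib

section
/- Let ε > 0, Û₀ > 0, L > 0, and define E[θ] = ∫_0^L ( (θ'(R) − Û₀)²/2 + ε·cos(2θ(R)) ) dR on continuously differentiable functions θ : [0,L] → ℝ. Let θ : [0,L] → ℝ be twice continuously differentiable, satisfy θ''(R) + 2ε·sin(2θ(R)) = 0 for all R ∈ [0,L], θ'(0) = θ'(L) = Û₀, θ'(R) > 0 for all R ∈ [0,L], θ(L − R) = −θ(R) for all R ∈ [0,L], and θ(L) = θ₀ with π/2 < θ₀ < π. Then θ is a local minimum of E. (A perversion whose amplitude exceeds π/2 crosses both maxima of the potential V(θ) = −ε·cos(2θ) and only one minimum, so its stability index is J = 1 − 2 = −1 and it is stable.) -/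
/-- The non-dimensional ladder energy
`E[θ] = ∫_0^L ((θ'(R) - Û₀)²/2 + ε·cos(2θ(R))) dR`. -/
noncomputable def ladderEnergy (ε U₀ L : ℝ) (θ : ℝ → ℝ) : ℝ :=
  ∫ R in (0 : ℝ)..L, ((deriv θ R - U₀) ^ 2 / 2 + ε * Real.cos (2 * θ R))

/-!
Suppose `θ'' = W'(θ)` with `θ' > 0`. Then `v = θ'` is a positive solution of the Jacobi equation
`v'' = W''(θ) v`, so `w = v' / v` solves the Riccati equation `w' + w² = W''(θ)`. For any such `w`,
adding the null Lagrangian `-(w φ²)'` turns the second variation `∫ (φ'² + W''(θ) φ²)` into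
`∫ (φ' - w φ)²` plus the boundary term `w(b) φ(b)² - w(a) φ(a)²`. The latter is nonnegative when
`θ''(a) ≤ 0 ≤ θ''(b)`. If moreover `0 < θ''(b)`, there is room to perturb `w` so that the Riccati
inequality becomes strict, and the gain `c φ²` absorbs the Taylor remainder of `W` as soon as `φ`
is uniformly small, whatever the size of `φ'`.
-/

open Set

section Taylor

variable {f : ℝ → ℝ}

theorem exists_eq_taylor_two (hf : ContDiff ℝ 2 f) (x h : ℝ) :
    ∃ ξ, |ξ - x| ≤ |h| ∧
      f (x + h) = f x + deriv f x * h + deriv (deriv f) ξ / 2 * h ^ 2 := by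
  rcases eq_or_ne h 0 with rfl | hh
  · exact ⟨x, by simp, by simp⟩
  have hne : x ≠ x + h := by simpa using hh
  obtain ⟨ξ, hξ, hrem⟩ := taylor_mean_remainder_lagrange_iteratedDeriv (n := 1) hne hf.contDiffOn
  have hfirst : derivWithin f (uIcc x (x + h)) x = deriv f x :=
    (hf.differentiable (by norm_num) x).derivWithin (uniqueDiffOn_uIcc hne x left_mem_uIcc)
  have hpoly : taylorWithinEval f 1 (uIcc x (x + h)) x (x + h) = f x + deriv f x * h := by
    simp [taylorWithinEval_succ, iteratedDerivWithin_one, hfirst, mul_comm]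
  have hsecond : iteratedDeriv 2 f ξ = deriv (deriv f) ξ := by simp [iteratedDeriv_succ]
  rw [hpoly, one_add_one_eq_two, hsecond, add_sub_cancel_left, Nat.factorial_two,
    Nat.cast_two] at hrem
  exact ⟨ξ, by simpa using abs_sub_left_of_mem_uIcc (uIoo_subset_uIcc_self hξ), by linarith⟩

theorem exists_pos_forall_taylor_two_le (hf : ContDiff ℝ 2 f) {K : Set ℝ} (hK : IsCompact K)
    {c : ℝ} (hc : 0 < c) :
    ∃ δ > 0, ∀ x ∈ K, ∀ h, |h| < δ →
      f x + deriv f x * h + (deriv (deriv f) x - c) / 2 * h ^ 2 ≤ f (x + h) := by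
  have hf'' : Continuous (deriv (deriv f)) := by
    simpa [iteratedDeriv_succ] using hf.continuous_iteratedDeriv 2 le_rfl
  obtain ⟨δ, hδ, hclose⟩ := Metric.mem_uniformity_dist.1 <|
    hK.uniformContinuousAt_of_continuousAt _ (fun x _ => hf''.continuousAt)
      (Metric.dist_mem_uniformity hc)
  refine ⟨δ, hδ, fun x hx h hh => ?_⟩
  obtain ⟨ξ, hξ, hfxh⟩ := exists_eq_taylor_two hf x h
  have hξx : dist x ξ < δ := by
    rw [dist_comm, Real.dist_eq]
    exact hξ.trans_lt hh
  have hlow : deriv (deriv f) x - c ≤ deriv (deriv f) ξ := by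
    have hdist : |deriv (deriv f) x - deriv (deriv f) ξ| < c := hclose hξx hx
    linarith [(abs_lt.1 hdist).2]
  rw [hfxh]
  gcongr

end Taylor

section Riccati

variable {q v p : ℝ → ℝ} {a b : ℝ}

/-- The field `w`, with derivative `w'`, satisfies the Riccati inequality `w' + w² ≤ q` on `[a, b]`
with the boundary signs for which `∫ (φ'² + q φ²) ≥ 0` holds for every `φ`, without any boundary
condition on `φ`. -/
structure IsRiccatiField (q w w' : ℝ → ℝ) (a b : ℝ) : Prop where
  hasDerivWithinAt : ∀ R ∈ Icc a b, HasDerivWithinAt w (w' R) (Icc a b) R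
  deriv_add_sq_le : ∀ R ∈ Icc a b, w' R + w R ^ 2 ≤ q R
  left_nonpos : w a ≤ 0
  right_nonneg : 0 ≤ w b

/-- In terms of `z = v² (w - v' / v)` the Riccati operator `w' + w²` is `q + z' / v² + z² / v⁴`,
with no term linear in `z`. -/
theorem hasDerivWithinAt_riccati {z : ℝ → ℝ} {z' R : ℝ} {s : Set ℝ}
    (hv : HasDerivWithinAt v (p R) s R) (hp : HasDerivWithinAt p (q R * v R) s R)
    (hz : HasDerivWithinAt z z' s R) (hv0 : v R ≠ 0) :
    HasDerivWithinAt (fun x => p x / v x + z x / v x ^ 2)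
      (q R + z' / v R ^ 2 + z R ^ 2 / v R ^ 4 - (p R / v R + z R / v R ^ 2) ^ 2) s R := by
  refine ((hp.div hv hv0).add (hz.div (hv.pow 2) (pow_ne_zero 2 hv0))).congr_deriv ?_
  simp only [Pi.pow_apply]
  field_simp
  ring

theorem neg_div_sq_add_sq_div_pow_four_le {s t x y : ℝ} (hs : 0 ≤ s) (hx : 0 < x) (hxy : x ≤ y)
    (ht : 2 * t ^ 2 * s ≤ x ^ 2) :
    -s / x ^ 2 + (-s * t) ^ 2 / x ^ 4 ≤ -(s / (2 * y ^ 2)) := by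
  have hquad : (-s * t) ^ 2 / x ^ 4 ≤ s / (2 * x ^ 2) := by
    rw [div_le_div_iff₀ (by positivity) (by positivity)]
    nlinarith [mul_le_mul_of_nonneg_left ht (by positivity : 0 ≤ s * x ^ 2)]
  have hmono : s / (2 * y ^ 2) ≤ s / (2 * x ^ 2) := by gcongr
  have hhalves : -s / x ^ 2 = -(s / (2 * x ^ 2)) - s / (2 * x ^ 2) := by
    field_simp
    norm_num
  linarith

theorem exists_isRiccatiField_of_pos (hab : a ≤ b)
    (hv : ∀ R ∈ Icc a b, HasDerivWithinAt v (p R) (Icc a b) R)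
    (hp : ∀ R ∈ Icc a b, HasDerivWithinAt p (q R * v R) (Icc a b) R)
    (hpos : ∀ R ∈ Icc a b, 0 < v R) (hpa : p a ≤ 0) (hpb : 0 < p b) :
    ∃ c > 0, ∃ w w', IsRiccatiField (fun R => q R - c) w w' a b := by
  have hcont : ContinuousOn v (Icc a b) := fun R hR => (hv R hR).continuousWithinAt
  have ha : a ∈ Icc a b := left_mem_Icc.2 hab
  have hb : b ∈ Icc a b := right_mem_Icc.2 hab
  obtain ⟨x, hx, hmin⟩ := isCompact_Icc.exists_isMinOn ⟨a, ha⟩ hcont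
  obtain ⟨y, hy, hmax⟩ := isCompact_Icc.exists_isMaxOn ⟨a, ha⟩ hcont
  have hvx := hpos x hx
  have hvy := hpos y hy
  have hvb := hpos b hb
  obtain ⟨s, hs, hsmall⟩ := exists_pos_mul_lt
    (lt_min (pow_pos hvx 2) (mul_pos hpb hvb)) (2 * (b - a) ^ 2 + (b - a))
  obtain ⟨hs_min, hs_right⟩ := lt_min_iff.1 hsmall
  have hlen : 0 ≤ (b - a) * s := mul_nonneg (sub_nonneg.2 hab) hs.le
  have hlen_sq : 0 ≤ (b - a) ^ 2 * s := by positivity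
  have hz (R : ℝ) : HasDerivWithinAt (fun x => -s * (x - a)) (-s) (Icc a b) R := by
    simpa using (((hasDerivAt_id R).sub_const a).const_mul (-s)).hasDerivWithinAt
  refine ⟨s / (2 * v y ^ 2), by positivity, _, _,
    fun R hR => hasDerivWithinAt_riccati (hv R hR) (hp R hR) (hz R) (hpos R hR).ne',
    fun R hR => ?_, ?_, ?_⟩
  · have hRa : (R - a) ^ 2 ≤ (b - a) ^ 2 :=
      pow_le_pow_left₀ (sub_nonneg.2 hR.1) (sub_le_sub_right hR.2 a) 2
    have hvxR : v x ^ 2 ≤ v R ^ 2 := pow_le_pow_left₀ hvx.le (hmin hR) 2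
    have hsR : 2 * (R - a) ^ 2 * s ≤ v R ^ 2 := by nlinarith
    linarith [neg_div_sq_add_sq_div_pow_four_le hs.le (hpos R hR) (hmax hR) hsR]
  · simpa using div_nonpos_of_nonpos_of_nonneg hpa (hpos a ha).le
  · have : p b / v b + -s * (b - a) / v b ^ 2 = (p b * v b - (b - a) * s) / v b ^ 2 := by
      field_simp
      ring
    rw [this]
    exact div_nonneg (by linarith) (by positivity)

end Riccati

section Energy

variable {W θ : ℝ → ℝ} {U₀ a b : ℝ}

/-- The energy on `[a, b]` of a profile `θ` with natural slope `U₀` in the potential `W`; the ladder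
energy is the case `W x = ε cos (2 x)`. -/
noncomputable def potentialEnergy (W : ℝ → ℝ) (U₀ a b : ℝ) (θ : ℝ → ℝ) : ℝ :=
  ∫ R in a..b, ((deriv θ R - U₀) ^ 2 / 2 + W (θ R))

theorem potentialEnergy_le_add_of_isRiccatiField {q w w' φ : ℝ → ℝ} (hab : a ≤ b)
    (hW : Continuous W) (hθ : ContDiff ℝ 2 θ) (ha : deriv θ a = U₀) (hb : deriv θ b = U₀)
    (hw : IsRiccatiField q w w' a b) (hφ : ContDiff ℝ 1 φ)
    (htaylor : ∀ R ∈ Icc a b,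
      W (θ R) + deriv (deriv θ) R * φ R + q R / 2 * φ R ^ 2 ≤ W (θ R + φ R)) :
    potentialEnergy W U₀ a b θ ≤ potentialEnergy W U₀ a b (θ + φ) := by
  have hθ' : ContDiff ℝ 1 (deriv θ) := hθ.deriv'
  have hφ_deriv (R : ℝ) : HasDerivAt φ (deriv φ R) R :=
    (hφ.differentiable one_ne_zero R).hasDerivAt
  have hθ'_deriv (R : ℝ) : HasDerivAt (deriv θ) (deriv (deriv θ) R) R :=
    (hθ'.differentiable one_ne_zero R).hasDerivAt
  have hadd : deriv (θ + φ) = deriv θ + deriv φ := funext fun R =>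
    deriv_add (hθ.differentiable two_ne_zero R) (hφ.differentiable one_ne_zero R)
  let B : ℝ → ℝ := fun R => (deriv θ R - U₀) * φ R + w R * φ R ^ 2 / 2
  let B' : ℝ → ℝ := fun R => deriv (deriv θ) R * φ R + (deriv θ R - U₀) * deriv φ R
    + (w' R * φ R ^ 2 + w R * (2 * φ R * deriv φ R)) / 2
  have hB : ∀ R ∈ Icc a b, HasDerivWithinAt B (B' R) (Icc a b) R := fun R hR =>
    ((((hθ'_deriv R).sub_const U₀).mul (hφ_deriv R)).hasDerivWithinAt.add
      (((hw.hasDerivWithinAt R hR).mul ((hφ_deriv R).pow 2).hasDerivWithinAt).div_const 2)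
      ).congr_deriv (by simp [B'])
  have hB_boundary : 0 ≤ B b - B a := by
    have hleft := mul_nonpos_of_nonpos_of_nonneg hw.left_nonpos (sq_nonneg (φ a))
    have hright := mul_nonneg hw.right_nonneg (sq_nonneg (φ b))
    simp only [B, ha, hb]
    linarith
  have hB'_le : ∀ R ∈ Icc a b, B' R ≤
      ((deriv θ R + deriv φ R - U₀) ^ 2 / 2 + W (θ R + φ R))
        - ((deriv θ R - U₀) ^ 2 / 2 + W (θ R)) := fun R hR => by
    have hric := mul_le_mul_of_nonneg_right (hw.deriv_add_sq_le R hR) (sq_nonneg (φ R))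
    simp only [B']
    linarith [htaylor R hR, sq_nonneg (deriv φ R - w R * φ R)]
  rw [← sub_nonneg, potentialEnergy, potentialEnergy, hadd,
    ← intervalIntegral.integral_sub (Continuous.intervalIntegrable (by fun_prop) _ _)
      (Continuous.intervalIntegrable (by fun_prop) _ _)]
  exact hB_boundary.trans <| intervalIntegral.sub_le_integral_of_hasDeriv_right_of_le hab
    (fun R hR => (hB R hR).continuousWithinAt)
    (fun R hR => ((hB R (Ioo_subset_Icc_self hR)).hasDerivAt
      (Icc_mem_nhds hR.1 hR.2)).hasDerivWithinAt)
    (Continuous.integrableOn_Icc (by fun_prop))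
    (fun R hR => hB'_le R (Ioo_subset_Icc_self hR))

theorem exists_pos_forall_potentialEnergy_le_add (hab : a ≤ b) (hW : ContDiff ℝ 2 W)
    (hθ : ContDiff ℝ 2 θ) (hEL : ∀ R ∈ Icc a b, deriv (deriv θ) R = deriv W (θ R))
    (ha : deriv θ a = U₀) (hb : deriv θ b = U₀) (hpos : ∀ R ∈ Icc a b, 0 < deriv θ R)
    (hWa : deriv W (θ a) ≤ 0) (hWb : 0 < deriv W (θ b)) :
    ∃ δ > 0, ∀ φ : ℝ → ℝ, ContDiff ℝ 1 φ → (∀ R ∈ Icc a b, |φ R| < δ) →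
      potentialEnergy W U₀ a b θ ≤ potentialEnergy W U₀ a b (θ + φ) := by
  have hv : ∀ R ∈ Icc a b, HasDerivWithinAt (deriv θ) (deriv W (θ R)) (Icc a b) R := fun R hR =>
    hEL R hR ▸ (hθ.deriv'.differentiable one_ne_zero R).hasDerivAt.hasDerivWithinAt
  have hp : ∀ R ∈ Icc a b, HasDerivWithinAt (deriv W ∘ θ)
      (deriv (deriv W) (θ R) * deriv θ R) (Icc a b) R := fun R _ =>
    ((hW.deriv'.differentiable one_ne_zero (θ R)).hasDerivAt.comp R
      (hθ.differentiable two_ne_zero R).hasDerivAt).hasDerivWithinAt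
  obtain ⟨c, hc, w, w', hw⟩ := exists_isRiccatiField_of_pos hab hv hp hpos hWa hWb
  obtain ⟨δ, hδ, htaylor⟩ := exists_pos_forall_taylor_two_le hW
    (isCompact_Icc.image (hθ.continuous (n := 2))) hc
  refine ⟨δ, hδ, fun φ hφ hsmall =>
    potentialEnergy_le_add_of_isRiccatiField hab hW.continuous hθ ha hb hw hφ fun R hR => ?_⟩
  rw [hEL R hR]
  exact htaylor (θ R) (mem_image_of_mem θ hR) (φ R) (hsmall R hR)

end Energy

theorem deriv_const_mul_cos_two_mul (ε x : ℝ) :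
    deriv (fun y => ε * Real.cos (2 * y)) x = -(2 * ε * Real.sin (2 * x)) := by
  have := (((hasDerivAt_id x).const_mul 2).cos.const_mul ε).deriv
  simp only [id, mul_one] at this
  rw [this]
  ring

theorem sin_two_mul_neg {x : ℝ} (hx : Real.pi / 2 < x) (hx' : x < Real.pi) :
    Real.sin (2 * x) < 0 := by
  have := Real.sin_neg_of_neg_of_neg_pi_lt (x := 2 * x - 2 * Real.pi) (by linarith) (by linarith)
  rwa [Real.sin_sub_two_pi] at this

theorem stmt_11_general {ε U₀ L : ℝ} (hL : 0 ≤ L) {θ : ℝ → ℝ} (hθ : ContDiff ℝ 2 θ)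
    (hEL : ∀ R ∈ Icc 0 L, deriv (deriv θ) R + 2 * ε * Real.sin (2 * θ R) = 0)
    (hb0 : deriv θ 0 = U₀) (hbL : deriv θ L = U₀) (hmono : ∀ R ∈ Icc 0 L, 0 < deriv θ R)
    (hsin0 : 0 ≤ ε * Real.sin (2 * θ 0)) (hsinL : ε * Real.sin (2 * θ L) < 0) :
    ∃ δ > 0, ∀ φ : ℝ → ℝ, ContDiff ℝ 1 φ → (∀ R ∈ Icc 0 L, |φ R| < δ) →
      ladderEnergy ε U₀ L θ ≤ ladderEnergy ε U₀ L (θ + φ) := by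
  refine exists_pos_forall_potentialEnergy_le_add (W := fun x => ε * Real.cos (2 * x)) hL
    (by fun_prop) hθ (fun R hR => ?_) hb0 hbL hmono ?_ ?_ <;> rw [deriv_const_mul_cos_two_mul]
  · linarith [hEL R hR]
  · linarith
  · linarith

/-- A perversion equilibrium whose amplitude `θ₀ = θ(L)` satisfies
`π/2 < θ₀ < π` is stable (a local minimum of the ladder energy). -/
theorem stmt_11 (ε U₀ L θ₀ : ℝ) (hε : 0 < ε) (hU₀ : 0 < U₀) (hL : 0 < L)
    (θ : ℝ → ℝ) (hθ : ContDiff ℝ 2 θ)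
    (hEL : ∀ R ∈ Set.Icc 0 L, deriv (deriv θ) R + 2 * ε * Real.sin (2 * θ R) = 0)
    (hb0 : deriv θ 0 = U₀) (hbL : deriv θ L = U₀)
    (hmono : ∀ R ∈ Set.Icc 0 L, 0 < deriv θ R)
    (hodd : ∀ R ∈ Set.Icc 0 L, θ (L - R) = -θ R)
    (hamp : θ L = θ₀) (hθ₀ : Real.pi / 2 < θ₀ ∧ θ₀ < Real.pi) :
    ∃ δ > 0, ∀ φ : ℝ → ℝ, ContDiff ℝ 1 φ →
      (∀ R ∈ Set.Icc 0 L, |φ R| + |deriv φ R| < δ) →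
      ladderEnergy ε U₀ L θ ≤ ladderEnergy ε U₀ L (θ + φ) := by
  have hθ0 : θ 0 = -θ L := by simpa using hodd L ⟨hL.le, le_rfl⟩
  have hsinL : ε * Real.sin (2 * θ L) < 0 :=
    mul_neg_of_pos_of_neg hε (hamp ▸ sin_two_mul_neg hθ₀.1 hθ₀.2)
  obtain ⟨δ, hδ, hmin⟩ := stmt_11_general hL.le hθ hEL hb0 hbL hmono
    (by simpa [hθ0] using hsinL.le) hsinL
  exact ⟨δ, hδ, fun φ hφ hsmall => hmin φ hφ fun R hR =>
    (le_add_of_nonneg_right (abs_nonneg _)).trans_lt (hsmall R hR)⟩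
end

section
/- Let ε > 0, Û₀ > 0, L > 0, and define E[θ] = ∫_0^L ( (θ'(R) − Û₀)²/2 + ε·cos(2θ(R)) ) dR on continuously differentiable functions θ : [0,L] → ℝ. Let θ : [0,L] → ℝ be twice continuously differentiable, satisfy θ''(R) + 2ε·sin(2θ(R)) = 0 for all R ∈ [0,L], θ'(0) = θ'(L) = Û₀, θ'(R) > 0 for all R ∈ [0,L], θ(L − R) = −θ(R) for all R ∈ [0,L], and θ(L) = θ₀ with 0 < θ₀ < π/2. Then θ is not a local minimum of E: for every δ > 0 there exists a continuously differentiable φ : [0,L] → ℝ with sup_{R ∈ [0,L]} (|φ(R)| + |φ'(R)|) < δ and E[θ + φ] < E[θ]. (A perversion whose amplitude is below π/2 crosses only the minimum of the potential V(θ) = −ε·cos(2θ) at θ = 0, so its stability index is J = +1 and it is unstable.) -/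
/-!
Translating an equilibrium `θ` along the ladder again solves the differential equation, so the
translation mode `θ'` satisfies the Jacobi equation and the second variation of the energy along
it reduces to the boundary term `[θ' θ'']`. Under the natural boundary conditions this is
`-2 ε Û₀ (sin (2 θ(L)) - sin (2 θ(0)))`, which is negative for a perversion of amplitude below
`π / 2`. As the remainder beyond second order is at most cubic in the perturbation, `θ + t θ'` has
smaller energy than `θ` for all small `t ≠ 0`.
-/

open Topology Real intervalIntegral Set

theorem abs_cos_add_sub_taylor_two_le (a x : ℝ) :
    |cos (a + x) - (cos a - sin a * x - cos a * x ^ 2 / 2)| ≤ |x| ^ 3 / 6 := by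
  rcases eq_or_ne x 0 with rfl | hx
  · simp
  have hne : a ≠ a + x := by simpa using hx
  obtain ⟨c, -, hc⟩ := taylor_mean_remainder_lagrange_iteratedDeriv (n := 2) hne
    contDiff_cos.contDiffOn
  have huniq : UniqueDiffOn ℝ (uIcc a (a + x)) := uniqueDiffOn_uIcc hne
  have hpoly : taylorWithinEval cos 2 (uIcc a (a + x)) a (a + x) =
      cos a - sin a * x - cos a * x ^ 2 / 2 := by
    simp only [taylorWithinEval_succ, taylor_within_zero_eval,
      iteratedDerivWithin_eq_iteratedDeriv huniq contDiff_cos.contDiffAt left_mem_uIcc,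
      iteratedDeriv_succ, iteratedDeriv_zero, deriv_cos', deriv.fun_neg', Real.deriv_sin,
      Nat.factorial, Nat.cast_zero, Nat.cast_one, smul_eq_mul]
    ring
  calc |cos (a + x) - _| = |iteratedDeriv 3 cos c| * |x| ^ 3 / 6 := by
        rw [← hpoly, hc, add_sub_cancel_left, abs_div, abs_mul, abs_pow]
        norm_num [Nat.factorial]
    _ ≤ 1 * |x| ^ 3 / 6 := by
        gcongr
        exact abs_iteratedDeriv_cos_le_one 3 c
    _ = |x| ^ 3 / 6 := by rw [one_mul]

section Variations

variable {ε U₀ L : ℝ} {θ φ : ℝ → ℝ}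

/-- The first variation `δE[θ](φ)` of the ladder energy. -/
noncomputable def ladderFirstVariation (ε U₀ L : ℝ) (θ φ : ℝ → ℝ) : ℝ :=
  ∫ R in (0 : ℝ)..L, ((deriv θ R - U₀) * deriv φ R - 2 * ε * sin (2 * θ R) * φ R)

/-- The second variation `δ²E[θ](φ)` of the ladder energy as a quadratic form in `φ`, normalized
so that `E[θ + φ] = E[θ] + δE[θ](φ) + δ²E[θ](φ) / 2` up to higher order. It does not involve `Û₀`,
on which the energy depends affinely up to a constant. -/
noncomputable def ladderSecondVariation (ε L : ℝ) (θ φ : ℝ → ℝ) : ℝ :=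
  ∫ R in (0 : ℝ)..L, (deriv φ R ^ 2 - 4 * ε * cos (2 * θ R) * φ R ^ 2)

theorem ladderFirstVariation_const_smul (ε U₀ L t : ℝ) (θ φ : ℝ → ℝ) :
    ladderFirstVariation ε U₀ L θ (t • φ) = t * ladderFirstVariation ε U₀ L θ φ := by
  simp only [ladderFirstVariation, deriv_const_smul_field, Pi.smul_apply, smul_eq_mul,
    ← integral_const_mul]
  congr! 2
  ring

theorem ladderSecondVariation_const_smul (ε L t : ℝ) (θ φ : ℝ → ℝ) :
    ladderSecondVariation ε L θ (t • φ) = t ^ 2 * ladderSecondVariation ε L θ φ := by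
  simp only [ladderSecondVariation, deriv_const_smul_field, Pi.smul_apply, smul_eq_mul,
    ← integral_const_mul]
  congr! 2
  ring

theorem ladderEnergy_add_sub_taylor_two (hθ : ContDiff ℝ 1 θ) (hφ : ContDiff ℝ 1 φ) :
    ladderEnergy ε U₀ L (θ + φ) - (ladderEnergy ε U₀ L θ + ladderFirstVariation ε U₀ L θ φ +
      ladderSecondVariation ε L θ φ / 2) =
    ∫ R in (0 : ℝ)..L, ε * (cos (2 * θ R + 2 * φ R) -
      (cos (2 * θ R) - sin (2 * θ R) * (2 * φ R) - cos (2 * θ R) * (2 * φ R) ^ 2 / 2)) := by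
  have hderiv : deriv (θ + φ) = deriv θ + deriv φ := funext fun R =>
    deriv_add (hθ.differentiable one_ne_zero R) (hφ.differentiable one_ne_zero R)
  simp only [ladderEnergy, ladderFirstVariation, ladderSecondVariation, hderiv, Pi.add_apply,
    ← integral_div]
  rw [← integral_add, ← integral_add, ← integral_sub]
  · congr! 2 with R
    rw [mul_add]
    ring
  all_goals exact Continuous.intervalIntegrable (by fun_prop) _ _

theorem abs_ladderEnergy_add_sub_taylor_two_le (hL : 0 ≤ L) (hθ : ContDiff ℝ 1 θ)
    (hφ : ContDiff ℝ 1 φ) :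
    |ladderEnergy ε U₀ L (θ + φ) - (ladderEnergy ε U₀ L θ + ladderFirstVariation ε U₀ L θ φ +
      ladderSecondVariation ε L θ φ / 2)| ≤ 4 / 3 * |ε| * ∫ R in (0 : ℝ)..L, |φ R| ^ 3 := by
  rw [ladderEnergy_add_sub_taylor_two hθ hφ, ← integral_const_mul, ← norm_eq_abs]
  have hint : IntervalIntegrable (fun R => 4 / 3 * |ε| * |φ R| ^ 3) MeasureTheory.volume 0 L :=
    Continuous.intervalIntegrable (by fun_prop) _ _
  refine norm_integral_le_of_norm_le hL (.of_forall fun R _ => ?_) hint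
  rw [norm_eq_abs]
  calc |ε * _| ≤ |ε| * (|2 * φ R| ^ 3 / 6) := by
        rw [abs_mul]
        gcongr
        exact abs_cos_add_sub_taylor_two_le _ _
    _ = 4 / 3 * |ε| * |φ R| ^ 3 := by
        rw [abs_mul, abs_two]
        ring

theorem eventually_ladderEnergy_add_smul_lt (hL : 0 ≤ L) (hθ : ContDiff ℝ 1 θ)
    (hφ : ContDiff ℝ 1 φ) (hfirst : ladderFirstVariation ε U₀ L θ φ = 0)
    (hsecond : ladderSecondVariation ε L θ φ < 0) :
    ∀ᶠ t : ℝ in 𝓝[≠] 0, ladderEnergy ε U₀ L (θ + t • φ) < ladderEnergy ε U₀ L θ := by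
  set Q := ladderSecondVariation ε L θ φ
  set C := 4 / 3 * |ε| * ∫ R in (0 : ℝ)..L, |φ R| ^ 3 with hC
  have hexp (t : ℝ) : ladderEnergy ε U₀ L (θ + t • φ) ≤
      ladderEnergy ε U₀ L θ + t ^ 2 * (Q / 2 + |t| * C) := by
    have hφt : ContDiff ℝ 1 (t • φ) := hφ.const_smul t
    have hbound := abs_ladderEnergy_add_sub_taylor_two_le (ε := ε) (U₀ := U₀) hL hθ hφt
    have hcubic : 4 / 3 * |ε| * ∫ R in (0 : ℝ)..L, |(t • φ) R| ^ 3 = t ^ 2 * |t| * C := by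
      simp only [Pi.smul_apply, smul_eq_mul, abs_mul, mul_pow, integral_const_mul, hC,
        ← sq_abs t]
      ring
    rw [ladderFirstVariation_const_smul, ladderSecondVariation_const_smul, hfirst, hcubic] at hbound
    linarith [(abs_le.mp hbound).2]
  have hneg : ∀ᶠ t : ℝ in 𝓝 0, Q / 2 + |t| * C < 0 := by
    have hcont : Continuous fun t : ℝ => Q / 2 + |t| * C := by fun_prop
    exact hcont.tendsto 0 |>.eventually_lt_const
      (by simpa using div_neg_of_neg_of_pos hsecond two_pos)
  filter_upwards [hneg.filter_mono nhdsWithin_le_nhds, self_mem_nhdsWithin] with t ht ht0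
  have hsq : 0 < t ^ 2 := sq_pos_of_ne_zero ht0
  linarith [hexp t, mul_neg_of_pos_of_neg hsq ht]

theorem ladderFirstVariation_eq_zero (hθ : ContDiff ℝ 2 θ)
    (hEL : ∀ R ∈ uIcc 0 L, deriv (deriv θ) R + 2 * ε * sin (2 * θ R) = 0)
    (hb0 : deriv θ 0 = U₀) (hbL : deriv θ L = U₀) (hφ : ContDiff ℝ 1 φ) :
    ladderFirstVariation ε U₀ L θ φ = 0 := by
  have hθ' : ContDiff ℝ 1 (deriv θ) := hθ.deriv'
  have hprim : ∀ R ∈ uIcc 0 L, HasDerivAt (fun R => (deriv θ R - U₀) * φ R)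
      ((deriv θ R - U₀) * deriv φ R - 2 * ε * sin (2 * θ R) * φ R) R := fun R hR =>
    (((hθ'.differentiable one_ne_zero R).hasDerivAt.sub_const U₀).mul
      (hφ.differentiable one_ne_zero R).hasDerivAt).congr_deriv
      (by linear_combination φ R * hEL R hR)
  rw [ladderFirstVariation, integral_eq_sub_of_hasDerivAt hprim
    (Continuous.intervalIntegrable (by fun_prop) _ _), hb0, hbL]
  ring

theorem ladderSecondVariation_deriv_self (hθ : ContDiff ℝ 2 θ)
    (hEL : ∀ R ∈ uIcc 0 L, deriv (deriv θ) R + 2 * ε * sin (2 * θ R) = 0) :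
    ladderSecondVariation ε L θ (deriv θ) =
      -(2 * ε * (deriv θ L * sin (2 * θ L) - deriv θ 0 * sin (2 * θ 0))) := by
  have hθ' : ContDiff ℝ 1 (deriv θ) := hθ.deriv'
  -- A primitive is `θ' θ''`, with `θ''` rewritten by the equation because `θ` is only `C²`.
  have hprim : ∀ R ∈ uIcc 0 L, HasDerivAt (fun R => deriv θ R * (-2 * ε * sin (2 * θ R)))
      (deriv (deriv θ) R ^ 2 - 4 * ε * cos (2 * θ R) * deriv θ R ^ 2) R := fun R hR =>
    ((hθ'.differentiable one_ne_zero R).hasDerivAt.mul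
      (((hθ.differentiable two_ne_zero R).hasDerivAt.const_mul 2).sin.const_mul
        (-2 * ε))).congr_deriv
      (by linear_combination -deriv (deriv θ) R * hEL R hR)
  rw [ladderSecondVariation, integral_eq_sub_of_hasDerivAt hprim
    (Continuous.intervalIntegrable (by fun_prop) _ _)]
  ring

end Variations

theorem eventually_forall_norm_smul_add_norm_deriv_smul_lt {F : Type*} [NormedAddCommGroup F]
    [NormedSpace ℝ F] {φ : ℝ → F} {K : Set ℝ} (hφ : ContDiff ℝ 1 φ) (hK : IsCompact K) {δ : ℝ}
    (hδ : 0 < δ) :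
    ∀ᶠ t : ℝ in 𝓝 0, ∀ R ∈ K, ‖(t • φ) R‖ + ‖deriv (t • φ) R‖ < δ := by
  obtain ⟨M, hM⟩ := hK.bddAbove_image (f := fun R => ‖φ R‖ + ‖deriv φ R‖)
    (Continuous.continuousOn (by fun_prop))
  have hsmall : ∀ᶠ t : ℝ in 𝓝 0, |t| * M < δ := by
    have hcont : Continuous fun t : ℝ => |t| * M := by fun_prop
    exact hcont.tendsto 0 |>.eventually_lt_const (by simpa using hδ)
  filter_upwards [hsmall] with t ht R hR
  calc ‖(t • φ) R‖ + ‖deriv (t • φ) R‖ = |t| * (‖φ R‖ + ‖deriv φ R‖) := by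
        simp only [deriv_const_smul_field, Pi.smul_apply, norm_smul, norm_eq_abs, mul_add]
    _ ≤ |t| * M := by
        gcongr
        exact hM (mem_image_of_mem _ hR)
    _ < δ := ht

theorem stmt_12_general {ε U₀ L : ℝ} (hL : 0 ≤ L) {θ : ℝ → ℝ} (hθ : ContDiff ℝ 2 θ)
    (hEL : ∀ R ∈ Icc 0 L, deriv (deriv θ) R + 2 * ε * sin (2 * θ R) = 0)
    (hb0 : deriv θ 0 = U₀) (hbL : deriv θ L = U₀)
    (hends : 0 < ε * U₀ * (sin (2 * θ L) - sin (2 * θ 0))) :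
    ∀ δ > 0, ∃ φ : ℝ → ℝ, ContDiff ℝ 1 φ ∧
      (∀ R ∈ Icc 0 L, |φ R| + |deriv φ R| < δ) ∧
      ladderEnergy ε U₀ L (θ + φ) < ladderEnergy ε U₀ L θ := by
  intro δ hδ
  rw [← uIcc_of_le hL] at hEL
  have hθ' : ContDiff ℝ 1 (deriv θ) := hθ.deriv'
  have hfirst := ladderFirstVariation_eq_zero hθ hEL hb0 hbL hθ'
  have hsecond : ladderSecondVariation ε L θ (deriv θ) < 0 := by
    rw [ladderSecondVariation_deriv_self hθ hEL, hb0, hbL]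
    linarith
  have hlower := eventually_ladderEnergy_add_smul_lt hL (hθ.of_le one_le_two) hθ' hfirst hsecond
  have hsmall := eventually_forall_norm_smul_add_norm_deriv_smul_lt hθ'
    (isCompact_Icc (a := 0) (b := L)) hδ
  obtain ⟨t, ht_lower, ht_small⟩ := (hlower.and (hsmall.filter_mono nhdsWithin_le_nhds)).exists
  exact ⟨t • deriv θ, hθ'.const_smul t, ht_small, ht_lower⟩

/-- A perversion equilibrium whose amplitude `θ₀ = θ(L)` satisfies
`0 < θ₀ < π/2` is unstable (not a local minimum of the ladder energy). -/
theorem stmt_12 (ε U₀ L θ₀ : ℝ) (hε : 0 < ε) (hU₀ : 0 < U₀) (hL : 0 < L)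
    (θ : ℝ → ℝ) (hθ : ContDiff ℝ 2 θ)
    (hEL : ∀ R ∈ Set.Icc 0 L, deriv (deriv θ) R + 2 * ε * Real.sin (2 * θ R) = 0)
    (hb0 : deriv θ 0 = U₀) (hbL : deriv θ L = U₀)
    (hmono : ∀ R ∈ Set.Icc 0 L, 0 < deriv θ R)
    (hodd : ∀ R ∈ Set.Icc 0 L, θ (L - R) = -θ R)
    (hamp : θ L = θ₀) (hθ₀ : 0 < θ₀ ∧ θ₀ < Real.pi / 2) :
    ∀ δ > 0, ∃ φ : ℝ → ℝ, ContDiff ℝ 1 φ ∧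
      (∀ R ∈ Set.Icc 0 L, |φ R| + |deriv φ R| < δ) ∧
      ladderEnergy ε U₀ L (θ + φ) < ladderEnergy ε U₀ L θ := by
  have hstart : θ 0 = -θ₀ := by simpa [hamp] using hodd L (right_mem_Icc.mpr hL.le)
  have hsin : 0 < sin (2 * θ₀) := sin_pos_of_pos_of_lt_pi (by linarith) (by linarith)
  exact stmt_12_general hL.le hθ hEL hb0 hbL (by
    rw [hamp, hstart, mul_neg, sin_neg, sub_neg_eq_add]
    positivity)
end

section
/- Let ε > 0, Û₀ > 0, L > 0, and define E[θ] = ∫_0^L ( (θ'(R) − Û₀)²/2 + ε·cos(2θ(R)) ) dR on continuously differentiable functions θ : [0,L] → ℝ. Let θ : [0,L] → ℝ be twice continuously differentiable, satisfy θ''(R) + 2ε·sin(2θ(R)) = 0 for all R ∈ [0,L], θ'(0) = θ'(L) = Û₀, θ'(R) > 0 for all R ∈ [0,L], with the symmetry θ(L − R) − π/2 = −(θ(R) − π/2) for all R ∈ [0,L] (a left-handed helical solution centered on π/2). If θ(L) ∈ (π/2, π), then θ is a local minimum of E; if θ(L) ∈ (π, 3π/2), then θ is not a local minimum of E. -/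
/-!
At an equilibrium `θ` for a potential `W`, the energy of `θ + φ` exceeds that of `θ` by half of the
second variation `Q[φ] = ∫ φ'² + W''(θ) φ²`, up to an error `o(1) ∫ φ²`. So a direction with
`Q[φ] < 0` destabilizes `θ`, and a bound `Q[φ] ≥ c ∫ φ²` with `c > 0` stabilizes it.

Differentiating `θ'' = W'(θ)` shows that `θ'` is a Jacobi field. Hence
`Q[θ'] = θ'(L) W'(θ(L)) - θ'(0) W'(θ(0))`, which is negative in the unstable case. If `θ' > 0`, then
`W'(θ) / θ'` solves the Riccati equation `p' + p² = W''(θ)`, and completing the square turns `Q`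
into `∫ (φ' - p φ)²` plus boundary terms, which are nonnegative in the stable case. Subtracting the
small multiple `η R / θ'²` from `p` makes the Riccati inequality strict, which gives the `c`.
-/

open Set intervalIntegral

/-- The energy `∫_0^L ((θ' - U)² / 2 + W(θ))` of a rod with spontaneous twist `U` in the
potential `W`; the ladder energy is the case `W(x) = ε cos(2x)`. -/
noncomputable def rodEnergy (W : ℝ → ℝ) (U L : ℝ) (θ : ℝ → ℝ) : ℝ :=
  ∫ R in (0 : ℝ)..L, ((deriv θ R - U) ^ 2 / 2 + W (θ R))

/-- Equilibria of `rodEnergy W U L`: solutions of the Euler-Lagrange equation on `[0, L]` with the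
natural boundary conditions. -/
structure IsRodEquilibrium (W : ℝ → ℝ) (U L : ℝ) (θ : ℝ → ℝ) : Prop where
  contDiff : ContDiff ℝ 2 θ
  deriv_deriv : ∀ R ∈ Icc 0 L, deriv (deriv θ) R = deriv W (θ R)
  deriv_left : deriv θ 0 = U
  deriv_right : deriv θ L = U

/-- `θ` is a local minimum of `rodEnergy W U L` in the `C¹` topology on `[0, L]`. -/
def IsWeakLocalMin (W : ℝ → ℝ) (U L : ℝ) (θ : ℝ → ℝ) : Prop :=
  ∃ δ > 0, ∀ φ : ℝ → ℝ, ContDiff ℝ 1 φ → (∀ R ∈ Icc 0 L, |φ R| + |deriv φ R| < δ) →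
    rodEnergy W U L θ ≤ rodEnergy W U L (θ + φ)

/-- The second variation `∫_0^L (φ'² + W''(θ) φ²)` of `rodEnergy W U L` at `θ` in the
direction `φ`. -/
noncomputable def secondVariation (W : ℝ → ℝ) (L : ℝ) (θ φ : ℝ → ℝ) : ℝ :=
  ∫ R in (0 : ℝ)..L, (deriv φ R ^ 2 + deriv (deriv W) (θ R) * φ R ^ 2)

/-- The remainder of the Taylor polynomial of degree two of `W` at `a`, with increment `y`. -/
noncomputable def taylorRemainder (W : ℝ → ℝ) (a y : ℝ) : ℝ :=
  W (a + y) - W a - deriv W a * y - deriv (deriv W) a / 2 * y ^ 2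

section Taylor

variable {W : ℝ → ℝ}

theorem abs_taylorRemainder_le (hW : ContDiff ℝ 2 W) {a y C : ℝ}
    (hC : ∀ x ∈ uIcc a (a + y), |deriv (deriv W) x - deriv (deriv W) a| ≤ C) :
    |taylorRemainder W a y| ≤ C * y ^ 2 := by
  have hW' (x : ℝ) : HasDerivAt W (deriv W x) x :=
    (hW.differentiable two_ne_zero x).hasDerivAt
  have hW'' (x : ℝ) : HasDerivAt (deriv W) (deriv (deriv W) x) x :=
    (hW.differentiable_deriv_two x).hasDerivAt
  have hC₀ : 0 ≤ C := (abs_nonneg _).trans (hC a left_mem_uIcc)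
  have first_order : ∀ x ∈ uIcc a (a + y),
      |deriv W x - deriv W a - deriv (deriv W) a * (x - a)| ≤ C * |y| := by
    intro x hx
    have h := (convex_uIcc a (a + y)).norm_image_sub_le_of_norm_hasDerivWithin_le
      (f := fun x => deriv W x - deriv (deriv W) a * (x - a))
      (fun z _ => ((hW'' z).sub
        (((hasDerivAt_id' z).sub_const a).const_mul _)).hasDerivWithinAt)
      (fun z hz => by simpa using hC z hz) left_mem_uIcc hx
    have hxy : |x - a| ≤ |y| := by simpa using abs_sub_left_of_mem_uIcc hx
    calc |deriv W x - deriv W a - deriv (deriv W) a * (x - a)|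
        ≤ C * |x - a| := by simpa [sub_right_comm] using h
      _ ≤ C * |y| := by gcongr
  have h := (convex_uIcc a (a + y)).norm_image_sub_le_of_norm_hasDerivWithin_le
    (f := fun x => W x - deriv W a * (x - a) - deriv (deriv W) a / 2 * (x - a) ^ 2)
    (f' := fun x => deriv W x - deriv W a - deriv (deriv W) a * (x - a))
    (fun z _ => by
      have hz := (hasDerivAt_id' z).sub_const a
      exact ((((hW' z).sub (hz.const_mul _)).sub ((hz.pow 2).const_mul _)).congr_deriv
        (by push_cast; ring)).hasDerivWithinAt)
    first_order left_mem_uIcc right_mem_uIcc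
  calc |taylorRemainder W a y| ≤ C * |y| * |a + y - a| := by
        refine (congrArg abs ?_).trans_le h
        rw [taylorRemainder]
        ring
    _ = C * y ^ 2 := by rw [add_sub_cancel_left, mul_assoc, abs_mul_abs_self, sq]

theorem exists_abs_taylorRemainder_le (hW : ContDiff ℝ 2 W) {K : Set ℝ} (hK : IsCompact K)
    {η : ℝ} (hη : 0 < η) :
    ∃ δ > 0, ∀ a ∈ K, ∀ y, |y| < δ → |taylorRemainder W a y| ≤ η * y ^ 2 := by
  have hW'' : Continuous (deriv (deriv W)) := hW.deriv'.continuous_deriv_one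
  obtain ⟨δ, hδ, hclose⟩ := Metric.mem_uniformity_dist.1
    (hK.uniformContinuousAt_of_continuousAt _ (fun a _ => hW''.continuousAt)
      (Metric.dist_mem_uniformity hη))
  refine ⟨δ, hδ, fun a ha y hy => abs_taylorRemainder_le hW fun x hx => ?_⟩
  have hxa : |x - a| ≤ |y| := by simpa using abs_sub_left_of_mem_uIcc hx
  have hdist : dist a x < δ := by
    rw [dist_comm, Real.dist_eq]
    exact hxa.trans_lt hy
  have h : dist (deriv (deriv W) a) (deriv (deriv W) x) < η := hclose hdist ha
  rw [dist_comm, Real.dist_eq] at h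
  exact h.le

end Taylor

section SecondVariation

variable {W θ φ : ℝ → ℝ} {U L : ℝ}

theorem IsRodEquilibrium.firstVariation_eq_zero (hθ : IsRodEquilibrium W U L θ) (hL : 0 ≤ L)
    (hW : ContDiff ℝ 1 W) (hφ : ContDiff ℝ 1 φ) :
    ∫ R in (0 : ℝ)..L, ((deriv θ R - U) * deriv φ R + deriv W (θ R) * φ R) = 0 := by
  have hθ₀ := hθ.contDiff.continuous
  have hθ₁ := hθ.contDiff.differentiable_deriv_two.continuous
  have hφ₀ := hφ.continuous
  have hderiv : ∀ R ∈ uIcc 0 L, HasDerivAt (fun R => (deriv θ R - U) * φ R)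
      ((deriv θ R - U) * deriv φ R + deriv W (θ R) * φ R) R := by
    intro R hR
    rw [uIcc_of_le hL] at hR
    rw [← hθ.deriv_deriv R hR, add_comm]
    exact ((hθ.contDiff.differentiable_deriv_two R).hasDerivAt.sub_const U).mul
      (hφ.differentiable one_ne_zero R).hasDerivAt
  rw [integral_eq_sub_of_hasDerivAt hderiv (Continuous.intervalIntegrable (by fun_prop) _ _)]
  simp [hθ.deriv_left, hθ.deriv_right]

theorem IsRodEquilibrium.rodEnergy_add (hθ : IsRodEquilibrium W U L θ) (hL : 0 ≤ L)
    (hW : ContDiff ℝ 2 W) (hφ : ContDiff ℝ 1 φ) :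
    rodEnergy W U L (θ + φ) = rodEnergy W U L θ + secondVariation W L θ φ / 2 +
      ∫ R in (0 : ℝ)..L, taylorRemainder W (θ R) (φ R) := by
  have hW₀ := hW.continuous
  have hW₁ := hW.differentiable_deriv_two.continuous
  have hθ₀ := hθ.contDiff.continuous
  have hθ₁ := hθ.contDiff.differentiable_deriv_two.continuous
  have hφ₀ := hφ.continuous
  have hadd (R : ℝ) : deriv (θ + φ) R = deriv θ R + deriv φ R :=
    deriv_add (hθ.contDiff.differentiable two_ne_zero R) (hφ.differentiable one_ne_zero R)
  have hexpand : rodEnergy W U L (θ + φ) = rodEnergy W U L θ +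
      (∫ R in (0 : ℝ)..L, ((deriv θ R - U) * deriv φ R + deriv W (θ R) * φ R)) +
      secondVariation W L θ φ / 2 + ∫ R in (0 : ℝ)..L, taylorRemainder W (θ R) (φ R) := by
    simp only [rodEnergy, secondVariation, taylorRemainder, hadd, Pi.add_apply]
    rw [← integral_div, ← integral_add, ← integral_add, ← integral_add]
    · congr 1 with R
      ring
    all_goals exact Continuous.intervalIntegrable (by fun_prop) _ _
  rwa [hθ.firstVariation_eq_zero hL (hW.of_le one_le_two) hφ, add_zero] at hexpand

theorem IsRodEquilibrium.exists_abs_rodEnergy_add_sub_le (hθ : IsRodEquilibrium W U L θ)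
    (hL : 0 ≤ L) (hW : ContDiff ℝ 2 W) {η : ℝ} (hη : 0 < η) :
    ∃ δ > 0, ∀ φ : ℝ → ℝ, ContDiff ℝ 1 φ → (∀ R ∈ Icc 0 L, |φ R| < δ) →
      |rodEnergy W U L (θ + φ) - rodEnergy W U L θ - secondVariation W L θ φ / 2| ≤
        η * ∫ R in (0 : ℝ)..L, φ R ^ 2 := by
  obtain ⟨δ, hδ, hrem⟩ := exists_abs_taylorRemainder_le hW
    (isCompact_Icc.image hθ.contDiff.continuous) hη
  refine ⟨δ, hδ, fun φ hφ hsmall => ?_⟩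
  have hφ₀ := hφ.continuous
  calc |rodEnergy W U L (θ + φ) - rodEnergy W U L θ - secondVariation W L θ φ / 2|
      = ‖∫ R in (0 : ℝ)..L, taylorRemainder W (θ R) (φ R)‖ := by
        rw [hθ.rodEnergy_add hL hW hφ, Real.norm_eq_abs]
        ring_nf
    _ ≤ ∫ R in (0 : ℝ)..L, η * φ R ^ 2 :=
        norm_integral_le_of_norm_le hL
          (.of_forall fun R hR => hrem _ (mem_image_of_mem θ (Ioc_subset_Icc_self hR)) _
            (hsmall R (Ioc_subset_Icc_self hR)))
          (Continuous.intervalIntegrable (by fun_prop) _ _)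
    _ = η * ∫ R in (0 : ℝ)..L, φ R ^ 2 := integral_const_mul _ _

theorem IsRodEquilibrium.isWeakLocalMin_of_coercive (hθ : IsRodEquilibrium W U L θ)
    (hL : 0 ≤ L) (hW : ContDiff ℝ 2 W) {c : ℝ} (hc : 0 < c)
    (hcoercive : ∀ φ : ℝ → ℝ, ContDiff ℝ 1 φ →
      c * ∫ R in (0 : ℝ)..L, φ R ^ 2 ≤ secondVariation W L θ φ) :
    IsWeakLocalMin W U L θ := by
  obtain ⟨δ, hδ, hexp⟩ := hθ.exists_abs_rodEnergy_add_sub_le hL hW (half_pos hc)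
  refine ⟨δ, hδ, fun φ hφ hsmall => ?_⟩
  have herr := hexp φ hφ fun R hR =>
    (le_add_of_nonneg_right (abs_nonneg _)).trans_lt (hsmall R hR)
  linarith [(abs_le.1 herr).1, hcoercive φ hφ]

theorem secondVariation_const_mul (t : ℝ) :
    secondVariation W L θ (fun R => t * φ R) = t ^ 2 * secondVariation W L θ φ := by
  simp only [secondVariation, ← integral_const_mul, deriv_const_mul_field']
  congr 1 with R
  ring

theorem exists_pos_forall_const_mul_lt (hφ : ContDiff ℝ 1 φ) (L : ℝ) {δ : ℝ} (hδ : 0 < δ) :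
    ∃ t > 0, ∀ R ∈ Icc 0 L, |t * φ R| + |deriv (fun R => t * φ R) R| < δ := by
  have hφ₀ := hφ.continuous
  obtain ⟨M, hM⟩ := isCompact_Icc.exists_bound_of_continuousOn (s := Icc 0 L)
    (f := fun R => |φ R| + |deriv φ R|) (by fun_prop)
  obtain ⟨t, ht, htM⟩ := exists_pos_mul_lt hδ |M|
  refine ⟨t, ht, fun R hR => ?_⟩
  calc |t * φ R| + |deriv (fun R => t * φ R) R| = t * (|φ R| + |deriv φ R|) := by
        rw [deriv_const_mul_field, abs_mul, abs_mul, abs_of_pos ht, mul_add]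
    _ ≤ t * |M| := by
        gcongr
        exact (le_abs_self _).trans ((hM R hR).trans (le_abs_self M))
    _ < δ := by rwa [mul_comm]

theorem IsRodEquilibrium.not_isWeakLocalMin_of_secondVariation_neg
    (hθ : IsRodEquilibrium W U L θ) (hL : 0 ≤ L) (hW : ContDiff ℝ 2 W) (hφ : ContDiff ℝ 1 φ)
    (hneg : secondVariation W L θ φ < 0) : ¬ IsWeakLocalMin W U L θ := by
  rintro ⟨δ, hδ, hmin⟩
  obtain ⟨η, hη, hηφ⟩ := exists_pos_mul_lt (half_pos (neg_pos.2 hneg))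
    (∫ R in (0 : ℝ)..L, φ R ^ 2)
  obtain ⟨δ', hδ', hexp⟩ := hθ.exists_abs_rodEnergy_add_sub_le hL hW hη
  obtain ⟨t, ht, hsmall⟩ := exists_pos_forall_const_mul_lt hφ L (lt_min hδ hδ')
  have htφ : ContDiff ℝ 1 (fun R => t * φ R) := contDiff_const.mul hφ
  have herr := hexp _ htφ fun R hR => (le_add_of_nonneg_right (abs_nonneg _)).trans_lt
    ((hsmall R hR).trans_le (min_le_right _ _))
  have hle := hmin _ htφ fun R hR => (hsmall R hR).trans_le (min_le_left _ _)
  simp only [mul_pow, integral_const_mul, secondVariation_const_mul] at herr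
  have : 0 < t ^ 2 * (-secondVariation W L θ φ / 2 - (∫ R in (0 : ℝ)..L, φ R ^ 2) * η) :=
    mul_pos (pow_pos ht 2) (sub_pos.2 hηφ)
  linarith [(abs_le.1 herr).2]

end SecondVariation

section Jacobi

variable {W θ : ℝ → ℝ} {U L : ℝ}

theorem IsRodEquilibrium.hasDerivAt_deriv (hθ : IsRodEquilibrium W U L θ) {R : ℝ}
    (hR : R ∈ Icc 0 L) : HasDerivAt (deriv θ) (deriv W (θ R)) R :=
  hθ.deriv_deriv R hR ▸ (hθ.contDiff.differentiable_deriv_two R).hasDerivAt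

theorem IsRodEquilibrium.hasDerivAt_deriv_comp (hθ : IsRodEquilibrium W U L θ)
    (hW : ContDiff ℝ 2 W) (R : ℝ) :
    HasDerivAt (fun R => deriv W (θ R)) (deriv (deriv W) (θ R) * deriv θ R) R :=
  (hW.differentiable_deriv_two (θ R)).hasDerivAt.comp R
    (hθ.contDiff.differentiable two_ne_zero R).hasDerivAt

theorem IsRodEquilibrium.secondVariation_deriv (hθ : IsRodEquilibrium W U L θ) (hL : 0 ≤ L)
    (hW : ContDiff ℝ 2 W) :
    secondVariation W L θ (deriv θ) = U * (deriv W (θ L) - deriv W (θ 0)) := by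
  have hθ₀ := hθ.contDiff.continuous
  have hθ₁ := hθ.contDiff.differentiable_deriv_two.continuous
  have hθ₂ : Continuous (deriv (deriv θ)) := hθ.contDiff.deriv'.continuous_deriv_one
  have hderiv : ∀ R ∈ uIcc 0 L, HasDerivAt (fun R => deriv θ R * deriv W (θ R))
      (deriv (deriv θ) R ^ 2 + deriv (deriv W) (θ R) * deriv θ R ^ 2) R := by
    intro R hR
    rw [uIcc_of_le hL] at hR
    refine ((hθ.hasDerivAt_deriv hR).mul (hθ.hasDerivAt_deriv_comp hW R)).congr_deriv ?_
    rw [hθ.deriv_deriv R hR]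
    ring
  rw [secondVariation,
    integral_eq_sub_of_hasDerivAt hderiv (Continuous.intervalIntegrable (by fun_prop) _ _),
    hθ.deriv_left, hθ.deriv_right, mul_sub]

theorem IsRodEquilibrium.not_isWeakLocalMin_of_mul_deriv_sub_neg
    (hθ : IsRodEquilibrium W U L θ) (hL : 0 ≤ L) (hW : ContDiff ℝ 2 W)
    (hneg : U * (deriv W (θ L) - deriv W (θ 0)) < 0) :
    ¬ IsWeakLocalMin W U L θ :=
  hθ.not_isWeakLocalMin_of_secondVariation_neg hL hW hθ.contDiff.deriv'
    (hθ.secondVariation_deriv hL hW ▸ hneg)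

end Jacobi

section Riccati

variable {W θ φ : ℝ → ℝ} {U L : ℝ}

theorem mul_integral_sq_le_of_riccati {p p' q : ℝ → ℝ} {c : ℝ} (hL : 0 ≤ L)
    (hp : ∀ R ∈ Icc 0 L, HasDerivAt p (p' R) R) (hq : Continuous q)
    (hriccati : ∀ R ∈ Icc 0 L, p' R + p R ^ 2 ≤ q R - c)
    (hp₀ : p 0 ≤ 0) (hpL : 0 ≤ p L) (hφ : ContDiff ℝ 1 φ) :
    c * ∫ R in (0 : ℝ)..L, φ R ^ 2 ≤ ∫ R in (0 : ℝ)..L, (deriv φ R ^ 2 + q R * φ R ^ 2) := by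
  have hφ₀ := hφ.continuous
  have hderiv : ∀ R ∈ Icc 0 L, HasDerivAt (fun R => p R * φ R ^ 2)
      (p' R * φ R ^ 2 + p R * (2 * φ R * deriv φ R)) R := fun R hR => by
    simpa using (hp R hR).fun_mul ((hφ.differentiable one_ne_zero R).hasDerivAt.fun_pow 2)
  have hsquare : ∀ R ∈ Icc 0 L, p' R * φ R ^ 2 + p R * (2 * φ R * deriv φ R) ≤
      deriv φ R ^ 2 + q R * φ R ^ 2 - c * φ R ^ 2 := fun R hR => by
    have := mul_le_mul_of_nonneg_right (hriccati R hR) (sq_nonneg (φ R))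
    linarith [sq_nonneg (deriv φ R - p R * φ R)]
  have hboundary : 0 ≤ p L * φ L ^ 2 - p 0 * φ 0 ^ 2 :=
    sub_nonneg.2 ((mul_nonpos_of_nonpos_of_nonneg hp₀ (sq_nonneg _)).trans
      (mul_nonneg hpL (sq_nonneg _)))
  have hle := hboundary.trans <| sub_le_integral_of_hasDeriv_right_of_le hL
    (fun R hR => (hderiv R hR).continuousAt.continuousWithinAt)
    (fun R hR => (hderiv R (Ioo_subset_Icc_self hR)).hasDerivWithinAt)
    (Continuous.integrableOn_Icc (by fun_prop)) fun R hR => hsquare R (Ioo_subset_Icc_self hR)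
  rw [integral_sub, integral_const_mul, sub_nonneg] at hle
  · exact hle
  all_goals exact Continuous.intervalIntegrable (by fun_prop) _ _

theorem IsRodEquilibrium.hasDerivAt_riccati (hθ : IsRodEquilibrium W U L θ)
    (hW : ContDiff ℝ 2 W) (η : ℝ) {R : ℝ} (hR : R ∈ Icc 0 L) (hθR : deriv θ R ≠ 0) :
    HasDerivAt (fun R => deriv W (θ R) / deriv θ R - η * R / deriv θ R ^ 2)
      (deriv (deriv W) (θ R) - (deriv W (θ R) / deriv θ R - η * R / deriv θ R ^ 2) ^ 2 -
        (η / deriv θ R ^ 2 - (η * R / deriv θ R ^ 2) ^ 2)) R := by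
  have hθ' := hθ.hasDerivAt_deriv hR
  refine (((hθ.hasDerivAt_deriv_comp hW R).div hθ' hθR).sub
    (((hasDerivAt_id' R).const_mul η).div (hθ'.pow 2) (pow_ne_zero 2 hθR))).congr_deriv ?_
  simp only [Pi.pow_apply]
  field_simp
  ring

theorem div_two_mul_sq_le_sub_sq {η R w M : ℝ} (hη : 0 ≤ η) (hw : 0 < w) (hwM : w ≤ M)
    (hηR : η * R ^ 2 ≤ w ^ 2 / 2) :
    η / (2 * M ^ 2) ≤ η / w ^ 2 - (η * R / w ^ 2) ^ 2 := by
  have hhalf : η * R ^ 2 / w ^ 2 ≤ 1 / 2 := by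
    rw [div_le_iff₀ (pow_pos hw 2)]
    linarith
  calc η / (2 * M ^ 2) ≤ η / (2 * w ^ 2) := by gcongr
    _ = η / w ^ 2 - η / w ^ 2 * (1 / 2) := by ring
    _ ≤ η / w ^ 2 - η / w ^ 2 * (η * R ^ 2 / w ^ 2) := by gcongr
    _ = η / w ^ 2 - (η * R / w ^ 2) ^ 2 := by ring

theorem IsRodEquilibrium.exists_pos_mul_integral_sq_le_secondVariation
    (hθ : IsRodEquilibrium W U L θ) (hL : 0 < L) (hW : ContDiff ℝ 2 W)
    (hpos : ∀ R ∈ Icc 0 L, 0 < deriv θ R)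
    (hW₀ : deriv W (θ 0) ≤ 0) (hWL : 0 < deriv W (θ L)) :
    ∃ c > 0, ∀ φ : ℝ → ℝ, ContDiff ℝ 1 φ →
      c * ∫ R in (0 : ℝ)..L, φ R ^ 2 ≤ secondVariation W L θ φ := by
  have hθ₀ := hθ.contDiff.continuous
  have hθ₁ := hθ.contDiff.differentiable_deriv_two.continuous
  have hU : 0 < U := hθ.deriv_left ▸ hpos 0 (left_mem_Icc.2 hL.le)
  have hne : (Icc 0 L).Nonempty := nonempty_Icc.2 hL.le
  obtain ⟨a, ha, hmin⟩ := isCompact_Icc.exists_isMinOn hne hθ₁.continuousOn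
  obtain ⟨b, hb, hmax⟩ := isCompact_Icc.exists_isMaxOn hne hθ₁.continuousOn
  have hm : 0 < deriv θ a := hpos a ha
  have hM : 0 < deriv θ b := hpos b hb
  obtain ⟨η, hη, hηm, hηL⟩ :
      ∃ η > 0, η * L ^ 2 ≤ deriv θ a ^ 2 / 2 ∧ η * L ≤ deriv W (θ L) * U := by
    refine ⟨min (deriv θ a ^ 2 / 2 / L ^ 2) (deriv W (θ L) * U / L), by positivity, ?_, ?_⟩
    · rw [← le_div_iff₀ (by positivity)]
      exact min_le_left _ _
    · rw [← le_div_iff₀ hL]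
      exact min_le_right _ _
  refine ⟨η / (2 * deriv θ b ^ 2), by positivity, fun φ hφ =>
    mul_integral_sq_le_of_riccati hL.le
      (fun R hR => hθ.hasDerivAt_riccati hW η hR (hpos R hR).ne') (by fun_prop) ?_ ?_ ?_ hφ⟩
  · intro R hR
    have hηR : η * R ^ 2 ≤ deriv θ R ^ 2 / 2 := calc
      η * R ^ 2 ≤ η * L ^ 2 := by gcongr; exacts [hR.1, hR.2]
      _ ≤ deriv θ a ^ 2 / 2 := hηm
      _ ≤ deriv θ R ^ 2 / 2 := by gcongr; exact hmin hR
    linarith [div_two_mul_sq_le_sub_sq hη.le (hpos R hR) (hmax hR) hηR]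
  · simpa [hθ.deriv_left] using div_nonpos_of_nonpos_of_nonneg hW₀ hU.le
  · have : deriv W (θ L) / U - η * L / U ^ 2 = (deriv W (θ L) * U - η * L) / U ^ 2 := by
      field_simp
    rw [hθ.deriv_right, this]
    exact div_nonneg (sub_nonneg.2 hηL) (sq_nonneg U)

theorem IsRodEquilibrium.isWeakLocalMin_of_deriv_pos (hθ : IsRodEquilibrium W U L θ) (hL : 0 < L)
    (hW : ContDiff ℝ 2 W) (hpos : ∀ R ∈ Icc 0 L, 0 < deriv θ R)
    (hW₀ : deriv W (θ 0) ≤ 0) (hWL : 0 < deriv W (θ L)) : IsWeakLocalMin W U L θ := by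
  obtain ⟨c, hc, hcoercive⟩ := hθ.exists_pos_mul_integral_sq_le_secondVariation hL hW hpos hW₀ hWL
  exact hθ.isWeakLocalMin_of_coercive hL.le hW hc hcoercive

end Riccati

theorem stmt_13_general {W θ : ℝ → ℝ} {U L : ℝ} (hL : 0 < L) (hW : ContDiff ℝ 2 W)
    (hθ : IsRodEquilibrium W U L θ) (hpos : ∀ R ∈ Icc 0 L, 0 < deriv θ R) :
    (deriv W (θ 0) ≤ 0 → 0 < deriv W (θ L) → IsWeakLocalMin W U L θ) ∧
      (deriv W (θ L) < deriv W (θ 0) → ¬ IsWeakLocalMin W U L θ) := by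
  have hU : 0 < U := hθ.deriv_left ▸ hpos 0 (left_mem_Icc.2 hL.le)
  exact ⟨hθ.isWeakLocalMin_of_deriv_pos hL hW hpos, fun h =>
    hθ.not_isWeakLocalMin_of_mul_deriv_sub_neg hL.le hW (mul_neg_of_pos_of_neg hU (sub_neg.2 h))⟩

section LadderPotential

/-- The potential in `ladderEnergy`, so that `ladderEnergy ε = rodEnergy (ladderPotential ε)`. In
the mechanical analogy, with `R` as time, the particle moves in the potential
`V = -ladderPotential ε`. -/
noncomputable def ladderPotential (ε x : ℝ) : ℝ := ε * Real.cos (2 * x)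

theorem contDiff_ladderPotential (ε : ℝ) : ContDiff ℝ 2 (ladderPotential ε) := by
  unfold ladderPotential
  fun_prop

theorem deriv_ladderPotential (ε x : ℝ) :
    deriv (ladderPotential ε) x = -(2 * ε * Real.sin (2 * x)) := by
  have h : HasDerivAt (ladderPotential ε) (ε * (-Real.sin (2 * x) * (2 * 1))) x :=
    (((hasDerivAt_id' x).const_mul 2).cos).const_mul ε
  rw [h.deriv]
  ring

theorem deriv_ladderPotential_pi_sub (ε x : ℝ) :
    deriv (ladderPotential ε) (Real.pi - x) = -deriv (ladderPotential ε) x := by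
  rw [deriv_ladderPotential, deriv_ladderPotential, mul_sub, Real.sin_two_pi_sub]
  ring

theorem deriv_ladderPotential_pos {ε x : ℝ} (hε : 0 < ε)
    (hx : x ∈ Ioo (Real.pi / 2) Real.pi) : 0 < deriv (ladderPotential ε) x := by
  have hsin : 0 < Real.sin (2 * x - Real.pi) :=
    Real.sin_pos_of_pos_of_lt_pi (by linarith [hx.1]) (by linarith [hx.2])
  rw [Real.sin_sub_pi] at hsin
  rw [deriv_ladderPotential, ← mul_neg]
  positivity

theorem deriv_ladderPotential_neg {ε x : ℝ} (hε : 0 < ε)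
    (hx : x ∈ Ioo Real.pi (3 * Real.pi / 2)) : deriv (ladderPotential ε) x < 0 := by
  have hsin : 0 < Real.sin (2 * x - 2 * Real.pi) :=
    Real.sin_pos_of_pos_of_lt_pi (by linarith [hx.1]) (by linarith [hx.2])
  rw [Real.sin_sub_two_pi] at hsin
  rw [deriv_ladderPotential, neg_lt_zero]
  positivity

end LadderPotential

/-- A left-handed helical equilibrium (monotone, symmetric about `θ = π/2`) is
stable if `θ(L) ∈ (π/2, π)` and unstable if `θ(L) ∈ (π, 3π/2)`. -/
theorem stmt_13 (ε U₀ L : ℝ) (hε : 0 < ε) (hU₀ : 0 < U₀) (hL : 0 < L)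
    (θ : ℝ → ℝ) (hθ : ContDiff ℝ 2 θ)
    (hEL : ∀ R ∈ Set.Icc 0 L, deriv (deriv θ) R + 2 * ε * Real.sin (2 * θ R) = 0)
    (hb0 : deriv θ 0 = U₀) (hbL : deriv θ L = U₀)
    (hmono : ∀ R ∈ Set.Icc 0 L, 0 < deriv θ R)
    (hsym : ∀ R ∈ Set.Icc 0 L,
      θ (L - R) - Real.pi / 2 = -(θ R - Real.pi / 2)) :
    (θ L ∈ Set.Ioo (Real.pi / 2) Real.pi →
      ∃ δ > 0, ∀ φ : ℝ → ℝ, ContDiff ℝ 1 φ →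
        (∀ R ∈ Set.Icc 0 L, |φ R| + |deriv φ R| < δ) →
        ladderEnergy ε U₀ L θ ≤ ladderEnergy ε U₀ L (θ + φ)) ∧
    (θ L ∈ Set.Ioo Real.pi (3 * Real.pi / 2) →
      ∀ δ > 0, ∃ φ : ℝ → ℝ, ContDiff ℝ 1 φ ∧
        (∀ R ∈ Set.Icc 0 L, |φ R| + |deriv φ R| < δ) ∧
        ladderEnergy ε U₀ L (θ + φ) < ladderEnergy ε U₀ L θ) := by
  have hW := contDiff_ladderPotential ε
  have hequil : IsRodEquilibrium (ladderPotential ε) U₀ L θ :=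
    ⟨hθ, fun R hR => by rw [deriv_ladderPotential]; linarith [hEL R hR], hb0, hbL⟩
  have hends : θ 0 = Real.pi - θ L := by
    have := hsym L (right_mem_Icc.2 hL.le)
    rw [sub_self] at this
    linarith
  have hodd : deriv (ladderPotential ε) (θ 0) = -deriv (ladderPotential ε) (θ L) := by
    rw [hends, deriv_ladderPotential_pi_sub]
  obtain ⟨stable, unstable⟩ := stmt_13_general hL hW hequil hmono
  constructor
  · intro hθL
    have hpos := deriv_ladderPotential_pos hε hθL
    exact stable (by linarith) hpos
  · intro hθL
    have hneg := deriv_ladderPotential_neg hε hθL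
    have hnot := unstable (by linarith)
    unfold IsWeakLocalMin at hnot
    push Not at hnot
    exact hnot
end
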